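/- arXiv:math/0510170 — 2 statements merged into one kernel-verified Lean document; each statement's English description precedes it below -/
import Mathlib

section
/- Let n ≥ 1, G = SL(n+1,ℝ), H = {diag((det h)⁻¹, h) : h ∈ GL(n,ℝ), det h > 0} ⊂ G, and X₁ = {(x,y) ∈ ℝ^{n+1} × ℝ^{n+1} : ⟨x,y⟩ = 1}. For a function f : G → ℂ the following are equivalent: (i) f(h₁ g h₂) = f(g) for all g ∈ G and h₁,h₂ ∈ H; (ii) there exists a function F : X₁ → ℂ with f(g) = F(g e₁, (gᵀ)⁻¹ e₁) for all g ∈ G, such that F is invariant under the scalings (x,y) ↦ (t x, t⁻¹ y) for all t > 0 and under the maps (x₁,x',y₁,y') ↦ (x₁, k x', y₁, (kᵀ)⁻¹ y') for all k ∈ GL(n,ℝ) with det k > 0. -/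
/-!
`SL(n+1, ℝ)` acts on pairs by `g • (x, y) = (g x, (gᵀ)⁻¹ y)`, and the map `i` of the statement is
the orbit map of `(e₁, e₁)`. An element `diag(d⁻¹, h)` of `H`, with `d = det h`, sends `(e₁, e₁)`
to its rescaling by `d⁻¹`, so right translation by `H` on `G` becomes scaling of pairs (every
`t > 0` occurs, because `n ≥ 1`). On a general pair the same element acts as the scaling by `d⁻¹`
composed with the block map of `k = d h`, of determinant `d ^ (n + 1)`; conversely, every `k` with
`det k > 0` is of this form, with `d` the `(n+1)`-st root of `det k`. So, given scaling
invariance, left translation by `H` corresponds to the block maps.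

This gives (ii) ⇒ (i) at once. For (i) ⇒ (ii), the stabilizer of `(e₁, e₁)` consists of the
matrices `diag(1, h)` with `det h = 1`, hence lies in `H`, so `f` factors through `i`. Take `F` to
be the factorization on the range of `i` and `0` elsewhere. The range is stable under `G` and
under scalings, so `F` has the required invariance at every pair, and surjectivity of `i` onto
`X₁` is not needed.
-/


open Matrix

/-- The block-diagonal matrix `diag(a, h)` of size `(n+1) × (n+1)`, with `(1,1)`-entry `a`,
lower-right `n × n` block `h`, and zero off-diagonal blocks. -/
def diagBlock {n : ℕ} (a : ℝ) (h : Matrix (Fin n) (Fin n) ℝ) :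
    Matrix (Fin (n + 1)) (Fin (n + 1)) ℝ :=
  Matrix.of fun i j =>
    Fin.cases (Fin.cases a (fun _ => (0 : ℝ)) j)
      (fun i' => Fin.cases (0 : ℝ) (fun j' => h i' j') j) i

/-- The subgroup `H = {diag((det h)⁻¹, h) : h ∈ GL(n, ℝ), det h > 0} ≅ GL⁺(n, ℝ)`
of `SL(n+1, ℝ)`, as a set. -/
def Hset (n : ℕ) : Set (Matrix.SpecialLinearGroup (Fin (n + 1)) ℝ) :=
  {g | ∃ h : Matrix (Fin n) (Fin n) ℝ, 0 < h.det ∧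
    (g : Matrix (Fin (n + 1)) (Fin (n + 1)) ℝ) = diagBlock (h.det)⁻¹ h}

/-- `e₁ = (1, 0, …, 0) ∈ ℝ^{n+1}`. -/
def e₁ (n : ℕ) : Fin (n + 1) → ℝ := fun i => if i = 0 then 1 else 0


section DiagBlock

variable {n : ℕ}

lemma diagBlock_mulVec (a : ℝ) (h : Matrix (Fin n) (Fin n) ℝ) (v : Fin (n + 1) → ℝ) :
    diagBlock a h *ᵥ v = Fin.cons (a * v 0) (h *ᵥ fun i => v i.succ) := by
  ext i
  refine Fin.cases ?_ (fun i => ?_) i <;>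
    simp [diagBlock, Matrix.mulVec, dotProduct, Fin.sum_univ_succ]

lemma diagBlock_transpose (a : ℝ) (h : Matrix (Fin n) (Fin n) ℝ) :
    (diagBlock a h)ᵀ = diagBlock a hᵀ := by
  ext i j
  refine Fin.cases ?_ (fun i => ?_) i <;> refine Fin.cases ?_ (fun j => ?_) j <;>
    simp [diagBlock]

lemma diagBlock_mul (a b : ℝ) (h k : Matrix (Fin n) (Fin n) ℝ) :
    diagBlock a h * diagBlock b k = diagBlock (a * b) (h * k) := by
  ext i j
  refine Fin.cases ?_ (fun i => ?_) i <;> refine Fin.cases ?_ (fun j => ?_) j <;>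
    simp [diagBlock, Matrix.mul_apply, Fin.sum_univ_succ]

lemma diagBlock_one : diagBlock 1 (1 : Matrix (Fin n) (Fin n) ℝ) = 1 := by
  ext i j
  refine Fin.cases ?_ (fun i => ?_) i <;> refine Fin.cases ?_ (fun j => ?_) j <;>
    simp [diagBlock, Matrix.one_apply, Fin.succ_ne_zero, (Fin.succ_ne_zero _).symm]

lemma diagBlock_det (a : ℝ) (h : Matrix (Fin n) (Fin n) ℝ) :
    (diagBlock a h).det = a * h.det := by
  have hs : (diagBlock a h).submatrix Fin.succ Fin.succ = h := by
    ext i j; simp [diagBlock]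
  have h0 : diagBlock a h 0 0 = a := by simp [diagBlock]
  have h0' : ∀ j : Fin n, diagBlock a h 0 j.succ = 0 := fun j => by simp [diagBlock]
  rw [Matrix.det_succ_row_zero, Fin.sum_univ_succ, h0]
  simp only [h0']
  rw [Fin.succAbove_zero, hs]
  simp

lemma diagBlock_inv {a : ℝ} {h : Matrix (Fin n) (Fin n) ℝ} (ha : a ≠ 0) (hd : h.det ≠ 0) :
    (diagBlock a h)⁻¹ = diagBlock a⁻¹ h⁻¹ := by
  apply Matrix.inv_eq_right_inv
  rw [diagBlock_mul, mul_inv_cancel₀ ha, Matrix.mul_nonsing_inv _ (isUnit_iff_ne_zero.2 hd),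
    diagBlock_one]

end DiagBlock

section Action

variable {n : ℕ}

local notation "G" => Matrix.SpecialLinearGroup (Fin (n + 1)) ℝ
local notation "V" => (Fin (n + 1) → ℝ) × (Fin (n + 1) → ℝ)

/-- The action `g • (x, y) = (g x, (gᵀ)⁻¹ y)` of `SL(n+1, ℝ)` on pairs of vectors. -/
noncomputable def pairAct (g : G) (p : V) : V :=
  ((g : Matrix (Fin (n + 1)) (Fin (n + 1)) ℝ) *ᵥ p.1,
    ((g : Matrix (Fin (n + 1)) (Fin (n + 1)) ℝ)ᵀ)⁻¹ *ᵥ p.2)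

lemma pairAct_mul (g k : G) (p : V) : pairAct (g * k) p = pairAct g (pairAct k p) := by
  simp [pairAct, Matrix.mulVec_mulVec, Matrix.transpose_mul, Matrix.mul_inv_rev]

lemma pairAct_one (p : V) : pairAct (1 : G) p = p := by
  simp [pairAct]

/-- The scaling `(x, y) ↦ (t x, t⁻¹ y)`. -/
noncomputable def pairScale (t : ℝ) (p : V) : V := (t • p.1, t⁻¹ • p.2)

lemma pairAct_pairScale (g : G) (t : ℝ) (p : V) :
    pairAct g (pairScale t p) = pairScale t (pairAct g p) := by
  simp [pairAct, pairScale, Matrix.mulVec_smul]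

lemma pairScale_inv {t : ℝ} (ht : t ≠ 0) (p : V) : pairScale t⁻¹ (pairScale t p) = p := by
  simp [pairScale, smul_smul, ht]

/-- The block map `(x₁, x', y₁, y') ↦ (x₁, k x', y₁, (kᵀ)⁻¹ y')`. -/
noncomputable def pairBlock (k : Matrix (Fin n) (Fin n) ℝ) (p : V) : V :=
  (Fin.cons (p.1 0) (k *ᵥ fun i => p.1 i.succ),
    Fin.cons (p.2 0) ((kᵀ)⁻¹ *ᵥ fun i => p.2 i.succ))

/-- The element `diag((det h)⁻¹, h)` of `H`. -/
noncomputable def Helt (h : Matrix (Fin n) (Fin n) ℝ) (hd : 0 < h.det) : G :=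
  ⟨diagBlock (h.det)⁻¹ h, by rw [diagBlock_det, inv_mul_cancel₀ hd.ne']⟩

lemma Helt_mem (h : Matrix (Fin n) (Fin n) ℝ) (hd : 0 < h.det) : Helt h hd ∈ Hset n :=
  ⟨h, hd, rfl⟩

lemma one_mem_Hset : (1 : G) ∈ Hset n :=
  ⟨1, by simp, by simp [diagBlock_one]⟩

/-- The base point `(e₁, e₁)`. -/
def basePair (n : ℕ) : (Fin (n + 1) → ℝ) × (Fin (n + 1) → ℝ) := (e₁ n, e₁ n)

/-- An element of `H` acts on pairs as a block map followed by a scaling. -/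
lemma pairAct_Hset {g : G} {h : Matrix (Fin n) (Fin n) ℝ} (hd : 0 < h.det)
    (hg : (g : Matrix (Fin (n + 1)) (Fin (n + 1)) ℝ) = diagBlock (h.det)⁻¹ h) (p : V) :
    pairAct g p = pairScale (h.det)⁻¹ (pairBlock (h.det • h) p) := by
  have hinv : (h.det • hᵀ)⁻¹ = (h.det)⁻¹ • (hᵀ)⁻¹ := by
    apply Matrix.inv_eq_right_inv
    rw [Matrix.smul_mul, Matrix.mul_smul, smul_smul, mul_inv_cancel₀ hd.ne', one_smul,
      Matrix.mul_nonsing_inv _ (isUnit_iff_ne_zero.2 (by simpa using hd.ne'))]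
  have hdT : hᵀ.det ≠ 0 := by simpa using hd.ne'
  unfold pairAct pairScale pairBlock
  rw [hg, diagBlock_transpose, diagBlock_inv (inv_ne_zero hd.ne') hdT, diagBlock_mulVec,
    diagBlock_mulVec, Matrix.transpose_smul, hinv]
  ext i
  · refine Fin.cases ?_ (fun i => ?_) i <;> simp [Matrix.smul_mulVec, hd.ne']
  · refine Fin.cases ?_ (fun i => ?_) i <;> simp [Matrix.smul_mulVec, hd.ne']

lemma pairBlock_basePair (k : Matrix (Fin n) (Fin n) ℝ) :
    pairBlock k (basePair n) = basePair n := by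
  have h0 : (fun i : Fin n => e₁ n i.succ) = 0 := by ext i; simp [e₁]
  simp only [pairBlock, basePair, h0, Matrix.mulVec_zero]
  ext i <;> refine Fin.cases ?_ (fun i => ?_) i <;> simp [e₁]

/-- Right translation by `H` becomes scaling under the orbit map. -/
lemma pairAct_mul_Hset (g : G) {k : G} {h : Matrix (Fin n) (Fin n) ℝ} (hd : 0 < h.det)
    (hk : (k : Matrix (Fin (n + 1)) (Fin (n + 1)) ℝ) = diagBlock (h.det)⁻¹ h) :
    pairAct (g * k) (basePair n) = pairScale (h.det)⁻¹ (pairAct g (basePair n)) := by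
  rw [pairAct_mul, pairAct_Hset hd hk, pairBlock_basePair, pairAct_pairScale]

/-- Every positive scaling comes from a right translation by `H`; this is where `n ≥ 1` enters. -/
lemma exists_mul_eq_pairScale (hn : 1 ≤ n) {t : ℝ} (ht : 0 < t) :
    ∃ k ∈ Hset n, ∀ g : G,
      pairAct (g * k) (basePair n) = pairScale t (pairAct g (basePair n)) := by
  let h : Matrix (Fin n) (Fin n) ℝ := Matrix.diagonal fun i => if i = ⟨0, hn⟩ then t⁻¹ else 1
  have hdet : h.det = t⁻¹ := by simp [h, Matrix.det_diagonal]
  have hd : 0 < h.det := by rw [hdet]; positivity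
  refine ⟨Helt h hd, Helt_mem h hd, fun g => ?_⟩
  rw [pairAct_mul_Hset g hd rfl, hdet, inv_inv]

/-- Every block map of positive determinant is an element of `H` up to a positive scaling. -/
lemma exists_pairAct_eq_pairBlock {k : Matrix (Fin n) (Fin n) ℝ} (hk : 0 < k.det) :
    ∃ m ∈ Hset n, ∃ t : ℝ, 0 < t ∧ ∀ p : V, pairAct m p = pairScale t (pairBlock k p) := by
  obtain ⟨d, hd0, hd⟩ : ∃ d : ℝ, 0 < d ∧ d ^ (n + 1) = k.det :=
    ⟨k.det ^ (((n + 1 : ℕ) : ℝ)⁻¹), Real.rpow_pos_of_pos hk _,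
      Real.rpow_inv_natCast_pow hk.le (Nat.succ_ne_zero n)⟩
  have hdet : (d⁻¹ • k).det = d := by
    rw [Matrix.det_smul, Fintype.card_fin, ← hd, pow_succ, inv_pow,
      inv_mul_cancel_left₀ (pow_ne_zero n hd0.ne')]
  have hpos : 0 < (d⁻¹ • k).det := by rw [hdet]; exact hd0
  refine ⟨Helt _ hpos, Helt_mem _ hpos, d⁻¹, inv_pos.2 hd0, fun p => ?_⟩
  rw [pairAct_Hset hpos rfl, hdet, smul_smul, mul_inv_cancel₀ hd0.ne', one_smul]

/-- The stabilizer of `(e₁, e₁)` is contained in `H`. -/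
lemma mem_Hset_of_stabilizer {m : G} (hm : pairAct m (basePair n) = basePair n) :
    m ∈ Hset n := by
  obtain ⟨M, hdet⟩ := m
  have h1 : M *ᵥ e₁ n = e₁ n := congrArg Prod.fst hm
  have h2 : Mᵀ *ᵥ e₁ n = e₁ n := by
    have h : (Mᵀ)⁻¹ *ᵥ e₁ n = e₁ n := congrArg Prod.snd hm
    have h' := congrArg (fun v => Mᵀ *ᵥ v) h
    simp only [Matrix.mulVec_mulVec] at h'
    rw [Matrix.mul_nonsing_inv _ (by simp [hdet]), Matrix.one_mulVec] at h'
    exact h'.symm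
  have hcol : ∀ i, M i 0 = e₁ n i := fun i => by
    rw [← congrFun h1 i]; simp [Matrix.mulVec, dotProduct, e₁]
  have hrow : ∀ j, M 0 j = e₁ n j := fun j => by
    rw [← congrFun h2 j]; simp [Matrix.mulVec, dotProduct, e₁]
  have hblock : M = diagBlock 1 (M.submatrix Fin.succ Fin.succ) := by
    ext i j
    refine Fin.cases ?_ (fun i => ?_) i <;> refine Fin.cases ?_ (fun j => ?_) j <;>
      simp [diagBlock, hcol, hrow, e₁]
  have hd : (M.submatrix Fin.succ Fin.succ).det = 1 := by
    rw [hblock, diagBlock_det, one_mul] at hdet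
    exact hdet
  exact ⟨M.submatrix Fin.succ Fin.succ, by rw [hd]; exact one_pos,
    by rw [hd, inv_one]; exact hblock⟩

end Action

/-- a function `f : SL(n+1, ℝ) → ℂ` is `H`-bi-invariant if and only if it is
of the form `f(g) = F(g e₁, (gᵀ)⁻¹ e₁)` for a function `F` on
`X₁ = {⟨x, y⟩ = 1}` invariant under the scalings `(x, y) ↦ (t x, t⁻¹ y)`, `t > 0`, and
under `(x₁, x', y₁, y') ↦ (x₁, k x', y₁, (kᵀ)⁻¹ y')` for `k ∈ GL⁺(n, ℝ)`. -/
theorem biinvariant_iff_pullback_from_X1 (n : ℕ) (hn : 1 ≤ n)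
    (f : Matrix.SpecialLinearGroup (Fin (n + 1)) ℝ → ℂ) :
    (∀ g : Matrix.SpecialLinearGroup (Fin (n + 1)) ℝ,
        ∀ h₁ ∈ Hset n, ∀ h₂ ∈ Hset n, f (h₁ * g * h₂) = f g) ↔
      ∃ F : (Fin (n + 1) → ℝ) × (Fin (n + 1) → ℝ) → ℂ,
        (∀ g : Matrix.SpecialLinearGroup (Fin (n + 1)) ℝ,
          f g = F ((g : Matrix (Fin (n + 1)) (Fin (n + 1)) ℝ) *ᵥ e₁ n,
            ((g : Matrix (Fin (n + 1)) (Fin (n + 1)) ℝ)ᵀ)⁻¹ *ᵥ e₁ n)) ∧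
        (∀ t : ℝ, 0 < t → ∀ x y : Fin (n + 1) → ℝ, x ⬝ᵥ y = 1 →
          F (t • x, t⁻¹ • y) = F (x, y)) ∧
        (∀ k : Matrix (Fin n) (Fin n) ℝ, 0 < k.det →
          ∀ x y : Fin (n + 1) → ℝ, x ⬝ᵥ y = 1 →
            F (Fin.cons (x 0) (k *ᵥ fun i => x i.succ),
               Fin.cons (y 0) ((kᵀ)⁻¹ *ᵥ fun i => y i.succ)) = F (x, y)) := by
  constructor
  · intro hf
    let i : Matrix.SpecialLinearGroup (Fin (n + 1)) ℝ →
        (Fin (n + 1) → ℝ) × (Fin (n + 1) → ℝ) := fun g => pairAct g (basePair n)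
    have hfac : Function.FactorsThrough f i := by
      intro g g' hgg
      have hstab : pairAct (g'⁻¹ * g) (basePair n) = basePair n := by
        rw [pairAct_mul, show pairAct g (basePair n) = pairAct g' (basePair n) from hgg,
          ← pairAct_mul, inv_mul_cancel, pairAct_one]
      simpa using hf g' 1 one_mem_Hset _ (mem_Hset_of_stabilizer hstab)
    let F := Function.extend i f 0
    have hF : ∀ g, F (i g) = f g := fun g => hfac.extend_apply 0 g
    have hF0 : ∀ p, (¬ ∃ g, i g = p) → F p = 0 := fun p hp => Function.extend_apply' _ _ _ hp
    have hscale : ∀ t : ℝ, 0 < t → ∀ p, F (pairScale t p) = F p := by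
      intro t ht p
      by_cases hp : ∃ g, i g = p
      · obtain ⟨g, rfl⟩ := hp
        obtain ⟨k, hk, hkg⟩ := exists_mul_eq_pairScale hn ht
        rw [← hkg g, hF g]
        simpa using (hF (g * k)).trans (by simpa using hf g 1 one_mem_Hset k hk)
      · rw [hF0 p hp, hF0]
        rintro ⟨g, hg⟩
        obtain ⟨k, -, hkg⟩ := exists_mul_eq_pairScale hn (inv_pos.2 ht)
        exact hp ⟨g * k, by rw [← pairScale_inv ht.ne' p, ← hg]; exact hkg g⟩
    have hact : ∀ m ∈ Hset n, ∀ p, F (pairAct m p) = F p := by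
      intro m hm p
      by_cases hp : ∃ g, i g = p
      · obtain ⟨g, rfl⟩ := hp
        rw [← pairAct_mul, hF g]
        exact (hF (m * g)).trans (by simpa using hf g m hm 1 one_mem_Hset)
      · rw [hF0 p hp, hF0]
        rintro ⟨g, hg⟩
        refine hp ⟨m⁻¹ * g, ?_⟩
        change pairAct (m⁻¹ * g) (basePair n) = p
        rw [pairAct_mul, show pairAct g (basePair n) = _ from hg, ← pairAct_mul, inv_mul_cancel,
          pairAct_one]
    refine ⟨F, fun g => (hF g).symm, fun t ht x y _ => hscale t ht (x, y),
      fun k hk x y _ => ?_⟩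
    obtain ⟨m, hm, t, ht, hmt⟩ := exists_pairAct_eq_pairBlock hk
    change F (pairBlock k (x, y)) = F (x, y)
    rw [← hscale t ht, ← hmt, hact m hm]
  · rintro ⟨F, hF, hscale, hblock⟩ g h₁ ⟨h, hd, hh⟩ h₂ ⟨k, hkd, hk⟩
    have hF' : ∀ g, f g = F (pairAct g (basePair n)) := hF
    -- The orbit of `(e₁, e₁)` lies in `X₁`, where the invariance of `F` is available.
    have hX : ∀ g, (pairAct g (basePair n)).1 ⬝ᵥ (pairAct g (basePair n)).2 = 1 := by
      intro g
      have hu : IsUnit (g : Matrix (Fin (n + 1)) (Fin (n + 1)) ℝ).det := by simp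
      simp only [pairAct, basePair]
      rw [← Matrix.transpose_nonsing_inv, Matrix.mulVec_transpose, dotProduct_comm,
        ← Matrix.dotProduct_mulVec, Matrix.mulVec_mulVec, Matrix.nonsing_inv_mul _ hu,
        Matrix.one_mulVec]
      simp [dotProduct, e₁]
    have hpd : 0 < (h.det • h).det := by
      rw [Matrix.det_smul]; positivity
    have hleft : F (pairAct (h₁ * g) (basePair n)) = F (pairAct g (basePair n)) := by
      -- `pairBlock (d h) p` is `d` times `h₁ • p`, so scaling invariance is applied at `h₁ • p`.
      have e : pairScale h.det (pairAct (h₁ * g) (basePair n)) =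
          pairBlock (h.det • h) (pairAct g (basePair n)) := by
        rw [pairAct_mul, pairAct_Hset hd hh]
        simpa using pairScale_inv (inv_ne_zero hd.ne') _
      rw [← hscale h.det hd _ _ (hX (h₁ * g))]
      change F (pairScale h.det (pairAct (h₁ * g) (basePair n))) = _
      rw [e]
      exact hblock _ hpd _ _ (hX g)
    rw [hF' (h₁ * g * h₂), hF' g, pairAct_mul_Hset _ hkd hk, ← hleft]
    exact hscale _ (inv_pos.2 hkd) _ _ (hX (h₁ * g))
end

section
/- Let n ≥ 2, G = SL(n+1,ℝ), H = {diag((det h)⁻¹, h) : h ∈ GL(n,ℝ), det h > 0}, and for a,b ∈ ℝ let m(a,b) ∈ SL(n+1,ℝ) be the matrix with upper-left 2×2 block [[a, ab−1],[1, b]] and lower-right (n−1)×(n−1) block the identity (zeros elsewhere). Then for g ∈ G the following are equivalent: (i) (g e₁)₁ · ((gᵀ)⁻¹ e₁)₁ < 1, where (·)₁ denotes the first coordinate; (ii) there exist h₁, h₂ ∈ H and a,b ∈ ℝ with ab < 1 such that g = h₁ m(a,b) h₂. -/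
/-!
Write `g = [[α, vᵀ], [u, D]]` and `g⁻¹ = [[δ, pᵀ], [q, E]]`. Then the quantity in (i) is `α δ`,
and `δ = det D` is a cofactor.

If `g = diag(s⁻¹, A) m(a, b) diag(t⁻¹, B)`, then `α = a / (s t)` and
`D = A diag(b, 1, …, 1) B`, so `δ = s t b` and `α δ = a b`.

Conversely, let `K = α δ - 1 < 0`; the decomposition is found with `a = α`, `b = δ` and
`A, B ∈ SL(n, ℝ)`. It amounts to `A e₁ = u`, `e₁ᵀ B = vᵀ / K` and `A B = M`, where
`M = D + ((1 - δ) / K) u vᵀ`. From `g⁻¹ g = 1` one gets `pᵀ u = -K` and `pᵀ M = -vᵀ`, so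
`w = -p / K` satisfies `wᵀ u = 1` and `wᵀ M = vᵀ / K`. As `n ≥ 2`, `SL(n, ℝ)` acts transitively on
pairs `(u, w)` with `wᵀ u = 1` (`exists_sl_pair`), which gives `A` with `A e₁ = u` and
`wᵀ A = e₁ᵀ`; then `B = A⁻¹ M` works, and `det B = 1` follows by comparing determinants.
-/

open Matrix

/-- The subgroup `H = {diag((det h)⁻¹, h) : h ∈ GL(n, ℝ), det h > 0} ≅ GL⁺(n, ℝ)`
of `SL(n+1, ℝ)`, as a set of matrices. -/
def HsetM (n : ℕ) : Set (Matrix (Fin (n + 1)) (Fin (n + 1)) ℝ) :=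
  {m | ∃ h : Matrix (Fin n) (Fin n) ℝ, 0 < h.det ∧ m = diagBlock (h.det)⁻¹ h}

/-- The matrix `m(a, b) ∈ SL(n+1, ℝ)` with upper-left `2 × 2` block `[[a, ab-1], [1, b]]`
and lower-right `(n-1) × (n-1)` block the identity (zeros elsewhere). -/
def mab (n : ℕ) (a b : ℝ) : Matrix (Fin (n + 1)) (Fin (n + 1)) ℝ :=
  Matrix.of fun i j =>
    if i = 0 then (if j = 0 then a else if j = 1 then a * b - 1 else 0)
    else if i = 1 then (if j = 0 then 1 else if j = 1 then b else 0)
    else if j = i then 1 else 0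

lemma det_one_add_vecMulVec {n : ℕ} (x f : Fin n → ℝ) :
    (1 + vecMulVec x f).det = 1 + f ⬝ᵥ x := by
  rw [vecMulVec_eq Unit, det_one_add_replicateCol_mul_replicateRow]

/-- A vector with a nonzero entry off the first coordinate is the image of
`e₁` under a transvection. -/
lemma exists_sl_of_ne {k : ℕ} (u : Fin (k + 1) → ℝ) (i : Fin (k + 1)) (hi : i ≠ 0)
    (hu : u i ≠ 0) :
    ∃ P : Matrix (Fin (k + 1)) (Fin (k + 1)) ℝ, P.det = 1 ∧ P *ᵥ Pi.single 0 1 = u := by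
  -- The functional `f` takes the value `1` at both `e₁` and `u`.
  set f : Fin (k + 1) → ℝ := Pi.single 0 1 + Pi.single i ((1 - u 0) / u i) with hf
  have h1 : f ⬝ᵥ Pi.single 0 1 = 1 := by simp [hf, hi.symm]
  have h2 : f ⬝ᵥ u = 1 := by
    simp [hf, add_dotProduct]
    field_simp
    ring
  refine ⟨1 + vecMulVec (u - Pi.single 0 1) f, ?_, ?_⟩
  · rw [det_one_add_vecMulVec, dotProduct_sub, h1, h2]; ring
  · rw [add_mulVec, one_mulVec, vecMulVec_mulVec, h1]
    simp

lemma exists_sl_of_ne_zero {k : ℕ} (hk : 1 ≤ k) (u : Fin (k + 1) → ℝ) (hu : u ≠ 0) :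
    ∃ P : Matrix (Fin (k + 1)) (Fin (k + 1)) ℝ, P.det = 1 ∧ P *ᵥ Pi.single 0 1 = u := by
  by_cases h : ∃ i, i ≠ 0 ∧ u i ≠ 0
  · obtain ⟨i, hi, hui⟩ := h
    exact exists_sl_of_ne u i hi hui
  push Not at h
  have hu0 : u 0 ≠ 0 := by
    intro h0
    apply hu
    funext i
    by_cases hi : i = 0
    · rw [hi, h0]; rfl
    · exact h i hi
  have hl : Fin.last k ≠ 0 := by
    intro h'
    have := congrArg Fin.val h'
    simp at this
    omega
  -- When `u` is a multiple of `e₁`, pass through the intermediate vector `u + e_last`.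
  obtain ⟨P, hP, hPu⟩ := exists_sl_of_ne (u + Pi.single (Fin.last k) 1) (Fin.last k) hl
    (by simp [h _ hl])
  refine ⟨(1 + vecMulVec (-Pi.single (Fin.last k) 1) (Pi.single 0 (u 0)⁻¹)) * P, ?_, ?_⟩
  · rw [det_mul, det_one_add_vecMulVec, hP]
    simp [hl.symm]
  · rw [← mulVec_mulVec, hPu, add_mulVec, one_mulVec, vecMulVec_mulVec]
    simp [hl.symm, hu0]

/-- `SL(n, ℝ)`, for `n ≥ 2`, acts transitively on the pairs of a vector and a covector whose
pairing is `1`. -/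
lemma exists_sl_pair {k : ℕ} (hk : 1 ≤ k) (u w : Fin (k + 1) → ℝ) (h : w ⬝ᵥ u = 1) :
    ∃ A : Matrix (Fin (k + 1)) (Fin (k + 1)) ℝ, A.det = 1 ∧ A *ᵥ Pi.single 0 1 = u ∧
      w ᵥ* A = Pi.single 0 1 := by
  have hu : u ≠ 0 := by
    rintro rfl
    simp at h
  obtain ⟨P, hP, hPu⟩ := exists_sl_of_ne_zero hk u hu
  have h1 : (w ᵥ* P) ⬝ᵥ Pi.single 0 1 = 1 := by rw [← dotProduct_mulVec, hPu, h]
  have h2 : (Pi.single 0 1 - w ᵥ* P) ⬝ᵥ Pi.single 0 1 = 0 := by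
    rw [sub_dotProduct, h1]; simp
  -- The second factor fixes `e₁` and moves the covector `wᵀ P` to `e₁ᵀ`.
  refine ⟨P * (1 + vecMulVec (Pi.single 0 1) (Pi.single 0 1 - w ᵥ* P)), ?_, ?_, ?_⟩
  · rw [det_mul, det_one_add_vecMulVec, h2, hP]; norm_num
  · rw [← mulVec_mulVec, add_mulVec, one_mulVec, vecMulVec_mulVec, h2]
    simp [hPu]
  · rw [← vecMul_vecMul, vecMul_add, vecMul_one, vecMul_vecMulVec, h1]
    simp

lemma det_diagBlock {n : ℕ} (a : ℝ) (h : Matrix (Fin n) (Fin n) ℝ) :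
    (diagBlock a h).det = a * h.det := by
  rw [det_succ_row_zero, Fin.sum_univ_succ]
  simp [diagBlock]
  left
  congr 1

/-- The lower-right block `diag(b, 1, …, 1)` of `m(a, b)`. -/
def lowerBlock (k : ℕ) (b : ℝ) : Matrix (Fin (k + 1)) (Fin (k + 1)) ℝ :=
  diagonal (Function.update 1 0 b)

lemma det_lowerBlock (k : ℕ) (b : ℝ) : (lowerBlock k b).det = b := by
  simp [lowerBlock, det_diagonal, Fin.prod_univ_succ]

lemma mab_zero_zero (k : ℕ) (a b : ℝ) : mab (k + 1) a b 0 0 = a := by simp [mab]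

lemma mab_zero_succ (k : ℕ) (a b : ℝ) (j : Fin (k + 1)) :
    mab (k + 1) a b 0 j.succ = if j = 0 then a * b - 1 else 0 := by
  have : (1 : Fin (k + 2)) = Fin.succ 0 := rfl
  simp only [mab, this, of_apply, Fin.succ_ne_zero, if_false, if_true, Fin.succ_inj]

lemma mab_succ_zero (k : ℕ) (a b : ℝ) (i : Fin (k + 1)) :
    mab (k + 1) a b i.succ 0 = if i = 0 then 1 else 0 := by
  have : (1 : Fin (k + 2)) = Fin.succ 0 := rfl
  simp only [mab, this, of_apply, Fin.succ_ne_zero, if_false, if_true, Fin.succ_inj,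
    (Fin.succ_ne_zero i).symm]

lemma mab_succ_succ (k : ℕ) (a b : ℝ) (i j : Fin (k + 1)) :
    mab (k + 1) a b i.succ j.succ = lowerBlock k b i j := by
  have : (1 : Fin (k + 2)) = Fin.succ 0 := rfl
  simp only [mab, this, lowerBlock, of_apply, Fin.succ_ne_zero, if_false, Fin.succ_inj,
    diagonal_apply, Function.update_apply, Pi.one_apply]
  aesop

lemma det_mab (k : ℕ) (a b : ℝ) : (mab (k + 1) a b).det = 1 := by
  have h0 : (mab (k + 1) a b).submatrix Fin.succ (Fin.succAbove 0) = lowerBlock k b := by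
    ext i j
    simp [mab_succ_succ]
  have h1 : (mab (k + 1) a b).submatrix Fin.succ (Fin.succAbove 1) = 1 := by
    ext i j
    refine Fin.cases ?_ (fun j => ?_) j
    · simp [mab_succ_zero, one_apply]
    · rw [submatrix_apply, Fin.one_succAbove_succ, mab_succ_succ, lowerBlock, diagonal_apply,
        one_apply]
      by_cases h : i = j.succ
      · simp [h]
      · simp [h]
  rw [det_succ_row_zero, Fin.sum_univ_succ, Fin.sum_univ_succ]
  simp only [mab_zero_succ, mab_zero_zero, h0, det_lowerBlock]
  simp [h1]

section product

variable {k : ℕ} (s t a b : ℝ) (A B : Matrix (Fin (k + 1)) (Fin (k + 1)) ℝ)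

lemma prod_zero_zero :
    (diagBlock s A * mab (k + 1) a b * diagBlock t B) 0 0 = s * a * t := by
  simp [mul_apply, Fin.sum_univ_succ (n := k + 1), diagBlock, mab_zero_zero]

lemma prod_zero_succ (j : Fin (k + 1)) :
    (diagBlock s A * mab (k + 1) a b * diagBlock t B) 0 j.succ = s * (a * b - 1) * B 0 j := by
  simp [mul_apply, Fin.sum_univ_succ (n := k + 1), diagBlock, mab_zero_succ]

lemma prod_succ_zero (i : Fin (k + 1)) :
    (diagBlock s A * mab (k + 1) a b * diagBlock t B) i.succ 0 = A i 0 * t := by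
  simp [mul_apply, Fin.sum_univ_succ (n := k + 1), diagBlock, mab_succ_zero]

lemma prod_succ_succ (i j : Fin (k + 1)) :
    (diagBlock s A * mab (k + 1) a b * diagBlock t B) i.succ j.succ
      = (A * lowerBlock k b * B) i j := by
  simp [mul_apply, Fin.sum_univ_succ (n := k + 1), diagBlock, mab_succ_succ]

end product

lemma mul_lowerBlock_mul {k : ℕ} (b : ℝ) (A B : Matrix (Fin (k + 1)) (Fin (k + 1)) ℝ)
    (i j : Fin (k + 1)) :
    (A * lowerBlock k b * B) i j = (A * B) i j - (1 - b) * A i 0 * B 0 j := by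
  rw [mul_apply, mul_apply, Fin.sum_univ_succ, Fin.sum_univ_succ]
  simp [lowerBlock, mul_diagonal]
  ring

lemma inv_transpose_mulVec_e₁ {n : ℕ} (g : Matrix (Fin (n + 1)) (Fin (n + 1)) ℝ) :
    ((gᵀ)⁻¹ *ᵥ e₁ n) 0 = g⁻¹ 0 0 := by
  simp [← transpose_nonsing_inv, mulVec, dotProduct, e₁]

lemma mulVec_e₁ {n : ℕ} (g : Matrix (Fin (n + 1)) (Fin (n + 1)) ℝ) :
    (g *ᵥ e₁ n) 0 = g 0 0 := by
  simp [mulVec, dotProduct, e₁]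

lemma inv_zero_zero {n : ℕ} (g : Matrix (Fin (n + 1)) (Fin (n + 1)) ℝ) (hg : g.det = 1) :
    g⁻¹ 0 0 = (g.submatrix Fin.succ Fin.succ).det := by
  rw [inv_def, hg]
  simp [adjugate_fin_succ_eq_det_submatrix]

/-- The existence half of the decomposition, with `a = g₀₀`, `b = (g⁻¹)₀₀` and both factors coming
from `SL(n, ℝ)`. -/
lemma exists_decomposition {k : ℕ} (hk : 1 ≤ k) (g : Matrix (Fin (k + 2)) (Fin (k + 2)) ℝ)
    (hg : g.det = 1) (hlt : g 0 0 * g⁻¹ 0 0 < 1) :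
    ∃ A B : Matrix (Fin (k + 1)) (Fin (k + 1)) ℝ, A.det = 1 ∧ B.det = 1 ∧
      g = diagBlock 1 A * mab (k + 1) (g 0 0) (g⁻¹ 0 0) * diagBlock 1 B := by
  have hinv : g⁻¹ * g = 1 := nonsing_inv_mul g (by simp [hg])
  set α := g 0 0 with hα
  set δ := g⁻¹ 0 0 with hδ
  set K := α * δ - 1 with hK
  have hK0 : K ≠ 0 := by rw [hK]; linarith
  set u : Fin (k + 1) → ℝ := fun i => g i.succ 0 with hu
  set v : Fin (k + 1) → ℝ := fun j => g 0 j.succ with hv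
  set p : Fin (k + 1) → ℝ := fun j => g⁻¹ 0 j.succ with hp
  set D := g.submatrix Fin.succ Fin.succ with hD
  have hpu : p ⬝ᵥ u = -K := by
    have h := congrFun (congrFun hinv 0) 0
    rw [mul_apply, Fin.sum_univ_succ, one_apply_eq] at h
    have h' : p ⬝ᵥ u = ∑ i : Fin (k + 1), g⁻¹ 0 i.succ * g i.succ 0 := rfl
    rw [h', hK]
    linarith
  have hpD : p ᵥ* D = -(δ • v) := by
    funext j
    have h := congrFun (congrFun hinv 0) j.succ
    rw [mul_apply, Fin.sum_univ_succ, one_apply_ne (Fin.succ_ne_zero j).symm] at h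
    have h' : (p ᵥ* D) j = ∑ i : Fin (k + 1), g⁻¹ 0 i.succ * g i.succ j.succ := rfl
    have h'' : (-(δ • v)) j = -(g⁻¹ 0 0 * g 0 j.succ) := rfl
    rw [h', h'']
    linarith
  set M := D + vecMulVec u (((1 - δ) / K) • v) with hM
  set w := (-K⁻¹) • p with hw
  have hwu : w ⬝ᵥ u = 1 := by
    rw [hw, smul_dotProduct, hpu, smul_eq_mul]
    field_simp
  have hwM : w ᵥ* M = K⁻¹ • v := by
    rw [hM, vecMul_add, vecMul_vecMulVec, hwu, hw, smul_vecMul, hpD]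
    funext j
    simp
    field_simp
    ring
  obtain ⟨A, hA, hAu, hwA⟩ := exists_sl_pair hk u w hwu
  have hAinv : A * A⁻¹ = 1 := mul_nonsing_inv A (by simp [hA])
  have hAB : A * (A⁻¹ * M) = M := by rw [← Matrix.mul_assoc, hAinv, Matrix.one_mul]
  have hA0 : ∀ i, A i 0 = u i := fun i => by simpa using congrFun hAu i
  have hB0 : ∀ j, (A⁻¹ * M) 0 j = K⁻¹ * v j := fun j => by
    have h : Pi.single 0 1 ᵥ* (A⁻¹ * M) = K⁻¹ • v := by
      rw [← hwA, vecMul_vecMul, hAB, hwM]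
    simpa using congrFun h j
  have hdec : g = diagBlock 1 A * mab (k + 1) α δ * diagBlock 1 (A⁻¹ * M) := by
    ext i j
    refine Fin.cases ?_ (fun i => ?_) i <;> refine Fin.cases ?_ (fun j => ?_) j
    · rw [prod_zero_zero]; simp [hα]
    · rw [prod_zero_succ, hB0, ← hK]
      field_simp
      rfl
    · rw [prod_succ_zero, hA0, mul_one]
    · rw [prod_succ_succ, mul_lowerBlock_mul, hAB, hA0, hB0, hM]
      have h : g i.succ j.succ = D i j := rfl
      rw [h, Matrix.add_apply, vecMulVec_apply, Pi.smul_apply, smul_eq_mul]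
      ring
  refine ⟨A, A⁻¹ * M, hA, ?_, hdec⟩
  have h := congrArg det hdec
  rw [det_mul (diagBlock 1 A * _), det_mul (diagBlock 1 A), det_mab, det_diagBlock,
    det_diagBlock, hA, hg] at h
  linarith

/-- for `g ∈ SL(n+1, ℝ)` (with `n ≥ 2`), the first coordinates `x₁, y₁` of
`(x, y) = (g e₁, (gᵀ)⁻¹ e₁)` satisfy `x₁ y₁ < 1` if and only if `g = h₁ m(a, b) h₂` with
`h₁, h₂ ∈ H` and `a b < 1`. -/
theorem decomposition_on_Q_pos (n : ℕ) (hn : 2 ≤ n)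
    (g : Matrix.SpecialLinearGroup (Fin (n + 1)) ℝ) :
    (((g : Matrix (Fin (n + 1)) (Fin (n + 1)) ℝ) *ᵥ e₁ n) 0 *
        (((g : Matrix (Fin (n + 1)) (Fin (n + 1)) ℝ)ᵀ)⁻¹ *ᵥ e₁ n) 0 < 1) ↔
      ∃ h₁ ∈ HsetM n, ∃ h₂ ∈ HsetM n, ∃ a b : ℝ, a * b < 1 ∧
        (g : Matrix (Fin (n + 1)) (Fin (n + 1)) ℝ) = h₁ * mab n a b * h₂ := by
  obtain ⟨k, rfl⟩ : ∃ k, n = k + 1 := ⟨n - 1, by omega⟩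
  obtain ⟨g, hg⟩ := g
  change (g *ᵥ e₁ (k + 1)) 0 * ((gᵀ)⁻¹ *ᵥ e₁ (k + 1)) 0 < 1 ↔
    ∃ h₁ ∈ HsetM (k + 1), ∃ h₂ ∈ HsetM (k + 1), ∃ a b : ℝ, a * b < 1 ∧
      g = h₁ * mab (k + 1) a b * h₂
  rw [mulVec_e₁, inv_transpose_mulVec_e₁]
  constructor
  · intro h
    obtain ⟨A, B, hA, hB, hdec⟩ := exists_decomposition (by omega) g hg h
    exact ⟨diagBlock 1 A, ⟨A, by simp [hA], by simp [hA]⟩, diagBlock 1 B,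
      ⟨B, by simp [hB], by simp [hB]⟩, _, _, h, hdec⟩
  · rintro ⟨_, ⟨A, hA, rfl⟩, _, ⟨B, hB, rfl⟩, a, b, hab, hdec⟩
    have hsub : g.submatrix Fin.succ Fin.succ = A * lowerBlock k b * B := by
      ext i j
      rw [submatrix_apply, hdec, prod_succ_succ]
    rw [inv_zero_zero g hg, hsub, hdec, prod_zero_zero, det_mul, det_mul, det_lowerBlock]
    have hab' : A.det⁻¹ * a * B.det⁻¹ * (A.det * b * B.det) = a * b := by
      field_simp
    rwa [hab']
end
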